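/- Every rule of SKS is derivable using only its dual rule, the general identity rule i↓, the general cut rule i↑ and the switch rule s. In particular, for every down rule ρ↓ of SKS, each instance of the corresponding up rule ρ↑ with premise C{P} and conclusion C{Q} can be replaced by a derivation from C{P} to C{Q} using only ρ↓, i↓, i↑ and s, and symmetrically for the down rules; the self-dual rules s and m are trivially derivable from themselves. -/

import Mathlib

/-!
An instance `P ⟶ Q` of a rule whose dual gives `¬Q ⟶ ¬P` is simulated, inside any context, by
`P = (P,t) ⟶ (P,[Q,¬Q]) ⟶ (P,[Q,¬P]) = (P,[¬P,Q]) ⟶ [(P,¬P),Q] ⟶ [f,Q] = Q`,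
using `i↓`, the dual rule, `s` and `i↑` in turn (`deriv_of_dual`).  For every rule of SKS other
than `s`, negating and exchanging premise and conclusion gives literally an instance of the dual
rule (`RootStep.dual_of_ne_s`); `s` itself is among the available rules.
-/

/-!
Deep-inference systems SKSg, SKS and KS for classical propositional logic
(the calculus of structures).  Formulas are built from atoms `a`, their
negations `ā`, and the units `t` (true) and `f` (false) by disjunction
`[P,Q]` (`dis`) and conjunction `(P,Q)` (`con`), and are considered modulo
the congruence `Equiv` generated by associativity, commutativity and the
unit laws.  Rules apply inside an arbitrary one-hole context and modulo the
equivalence.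
-/

namespace DI

/-- Formulas of the calculus of structures for classical logic:
units `t`, `f`; atoms `pos a`; negated atoms `neg a`; disjunction `dis`
(written `[P,Q]`); conjunction `con` (written `(P,Q)`). -/
inductive F : Type where
  | tt  : F
  | ff  : F
  | pos : ℕ → F
  | neg : ℕ → F
  | dis : F → F → F
  | con : F → F → F
deriving DecidableEq

/-- Negation, pushed to the atoms by the De Morgan laws:
`¬t = f`, `¬f = t`, `¬[P,Q] = (¬P,¬Q)`, `¬(P,Q) = [¬P,¬Q]`, `¬¬P = P`. -/
def F.negF : F → F
  | .tt => .ff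
  | .ff => .tt
  | .pos a => .neg a
  | .neg a => .pos a
  | .dis P Q => .con P.negF Q.negF
  | .con P Q => .dis P.negF Q.negF

/-- Atoms are the propositional symbols and their negations. -/
def F.isAtom : F → Prop
  | .pos _ => True
  | .neg _ => True
  | _ => False

/-- Syntactic equivalence of formulas: the smallest congruence generated by
associativity and commutativity of both connectives and the unit laws
`[t,t]=t`, `(f,f)=f`, `[f,P]=P`, `(t,P)=P`. -/
inductive Equiv : F → F → Prop where
  | refl (P : F) : Equiv P P
  | symm {P Q : F} : Equiv P Q → Equiv Q P
  | trans {P Q R : F} : Equiv P Q → Equiv Q R → Equiv P R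
  | disComm (P Q : F) : Equiv (.dis P Q) (.dis Q P)
  | conComm (P Q : F) : Equiv (.con P Q) (.con Q P)
  | disAssoc (P Q R : F) : Equiv (.dis (.dis P Q) R) (.dis P (.dis Q R))
  | conAssoc (P Q R : F) : Equiv (.con (.con P Q) R) (.con P (.con Q R))
  | ttDis : Equiv (.dis .tt .tt) .tt
  | ffCon : Equiv (.con .ff .ff) .ff
  | ffDis (P : F) : Equiv (.dis .ff P) P
  | ttCon (P : F) : Equiv (.con .tt P) P
  | disCongr {P P' Q Q' : F} :
      Equiv P P' → Equiv Q Q' → Equiv (.dis P Q) (.dis P' Q')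
  | conCongr {P P' Q Q' : F} :
      Equiv P P' → Equiv Q Q' → Equiv (.con P Q) (.con P' Q')

/-- One-hole contexts. -/
inductive Ctx : Type where
  | hole : Ctx
  | disL : Ctx → F → Ctx
  | disR : F → Ctx → Ctx
  | conL : Ctx → F → Ctx
  | conR : F → Ctx → Ctx

/-- Plugging a formula into the hole of a context. -/
def Ctx.fill : Ctx → F → F
  | .hole, P => P
  | .disL C Q, P => .dis (C.fill P) Q
  | .disR Q C, P => .dis Q (C.fill P)
  | .conL C Q, P => .con (C.fill P) Q
  | .conR Q C, P => .con Q (C.fill P)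

/-- Names of the inference rules of SKSg and SKS. -/
inductive Rule : Type where
  | iDown | iUp | wDown | wUp | cDown | cUp | s | m
  | aiDown | aiUp | awDown | awUp | acDown | acUp
deriving DecidableEq

/-- The rules, read at the root of a formula (premise on the left,
conclusion on the right). -/
inductive RootStep : Rule → F → F → Prop where
  | iDown (P : F) : RootStep .iDown .tt (.dis P P.negF)
  | iUp (P : F) : RootStep .iUp (.con P P.negF) .ff
  | wDown (P : F) : RootStep .wDown .ff P
  | wUp (P : F) : RootStep .wUp P .tt
  | cDown (P : F) : RootStep .cDown (.dis P P) P
  | cUp (P : F) : RootStep .cUp P (.con P P)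
  | s (P Q R : F) : RootStep .s (.con P (.dis Q R)) (.dis (.con P Q) R)
  | m (P Q R S : F) :
      RootStep .m (.dis (.con P Q) (.con R S)) (.con (.dis P R) (.dis Q S))
  | aiDown (A : F) (h : A.isAtom) : RootStep .aiDown .tt (.dis A A.negF)
  | aiUp (A : F) (h : A.isAtom) : RootStep .aiUp (.con A A.negF) .ff
  | awDown (A : F) (h : A.isAtom) : RootStep .awDown .ff A
  | awUp (A : F) (h : A.isAtom) : RootStep .awUp A .tt
  | acDown (A : F) (h : A.isAtom) : RootStep .acDown (.dis A A) A
  | acUp (A : F) (h : A.isAtom) : RootStep .acUp A (.con A A)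

/-- One inference step using a rule from the set `Rs`, applied inside an
arbitrary context and modulo the equivalence. -/
def Step (Rs : Set Rule) (P Q : F) : Prop :=
  ∃ r ∈ Rs, ∃ (C : Ctx) (P' Q' : F),
    RootStep r P' Q' ∧ Equiv P (C.fill P') ∧ Equiv (C.fill Q') Q

/-- Derivations over an arbitrary step relation: a finite sequence of rule
instances from the premise to the conclusion (modulo the equivalence). -/
inductive Deriv (St : F → F → Prop) : F → F → Prop where
  | eqv {P Q : F} : Equiv P Q → Deriv St P Q
  | step {P Q R : F} : St P Q → Deriv St Q R → Deriv St P R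

/-- The system SKSg: general (non-atomic) rules plus switch. -/
def SKSg : Set Rule := {.iDown, .iUp, .wDown, .wUp, .cDown, .cUp, .s}

/-- The system SKS: atomic rules plus switch and medial. -/
def SKS : Set Rule := {.aiDown, .aiUp, .awDown, .awUp, .acDown, .acUp, .s, .m}

/-- The system KS: the down fragment of SKS. -/
def KS : Set Rule := {.aiDown, .awDown, .acDown, .s, .m}

/-- A proof of `Q` in the system `Rs` is a derivation from the unit `t` to `Q`. -/
def Proof (Rs : Set Rule) (Q : F) : Prop := Deriv (Step Rs) .tt Q

/-- A rule `r` is derivable from a set `Rs` of rules if every instance of `r`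
(with premise `P` and conclusion `Q`) can be replaced by a derivation from
`P` to `Q` using only rules of `Rs`. -/
def RuleDerivable (r : Rule) (Rs : Set Rule) : Prop :=
  ∀ P Q : F, Step {r} P Q → Deriv (Step Rs) P Q

end DI

namespace DI

/-- The dual of a rule, obtained by exchanging premise and conclusion and
negating both.  The switch `s` and the medial `m` are self-dual. -/
def Rule.dual : Rule → Rule
  | .iDown => .iUp
  | .iUp => .iDown
  | .wDown => .wUp
  | .wUp => .wDown
  | .cDown => .cUp
  | .cUp => .cDown
  | .s => .s
  | .m => .m
  | .aiDown => .aiUp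
  | .aiUp => .aiDown
  | .awDown => .awUp
  | .awUp => .awDown
  | .acDown => .acUp
  | .acUp => .acDown

theorem F.isAtom.negF {A : F} (h : A.isAtom) : A.negF.isAtom := by
  cases A <;> simp_all [F.isAtom, F.negF]

/-- Composition of contexts: `(C.comp D).fill P` is `C.fill (D.fill P)`. -/
def Ctx.comp : Ctx → Ctx → Ctx
  | .hole, D => D
  | .disL C Q, D => .disL (C.comp D) Q
  | .disR Q C, D => .disR Q (C.comp D)
  | .conL C Q, D => .conL (C.comp D) Q
  | .conR Q C, D => .conR Q (C.comp D)

theorem Ctx.fill_comp (C D : Ctx) (P : F) : (C.comp D).fill P = C.fill (D.fill P) := by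
  induction C <;> simp_all [Ctx.comp, Ctx.fill]

theorem Equiv.fill (C : Ctx) {P Q : F} (h : Equiv P Q) : Equiv (C.fill P) (C.fill Q) := by
  induction C with
  | hole => exact h
  | disL C R ih => exact .disCongr ih (.refl _)
  | disR R C ih => exact .disCongr (.refl _) ih
  | conL C R ih => exact .conCongr ih (.refl _)
  | conR R C ih => exact .conCongr (.refl _) ih

theorem Step.fill {Rs : Set Rule} (C : Ctx) {P Q : F} (h : Step Rs P Q) :
    Step Rs (C.fill P) (C.fill Q) := by
  obtain ⟨r, hr, D, P', Q', hroot, hP, hQ⟩ := h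
  refine ⟨r, hr, C.comp D, P', Q', hroot, ?_, ?_⟩
  · rw [Ctx.fill_comp]; exact hP.fill C
  · rw [Ctx.fill_comp]; exact hQ.fill C

theorem Deriv.fill {Rs : Set Rule} (C : Ctx) {P Q : F} (h : Deriv (Step Rs) P Q) :
    Deriv (Step Rs) (C.fill P) (C.fill Q) := by
  induction h with
  | eqv h => exact .eqv (h.fill C)
  | step h _ ih => exact .step (h.fill C) ih

theorem Step.congr {Rs : Set Rule} {P P' Q Q' : F} (hP : Equiv P P') (h : Step Rs P' Q')
    (hQ : Equiv Q' Q) : Step Rs P Q := by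
  obtain ⟨r, hr, D, A, B, hroot, hA, hB⟩ := h
  exact ⟨r, hr, D, A, B, hroot, hP.trans hA, hB.trans hQ⟩

theorem Deriv.congr {Rs : Set Rule} {P P' Q Q' : F} (hP : Equiv P P')
    (h : Deriv (Step Rs) P' Q') (hQ : Equiv Q' Q) : Deriv (Step Rs) P Q := by
  induction h generalizing P with
  | eqv h => exact .eqv (hP.trans (h.trans hQ))
  | step h _ ih => exact .step (h.congr hP (.refl _)) (ih (.refl _) hQ)

theorem RootStep.step {Rs : Set Rule} {r : Rule} (hr : r ∈ Rs) (C : Ctx) {P Q : F}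
    (h : RootStep r P Q) : Step Rs (C.fill P) (C.fill Q) :=
  ⟨r, hr, C, P, Q, h, .refl _, .refl _⟩

/-- If `r` takes `¬Q` to `¬P`, then `Q` is derivable from `P` by `r`, `i↓`, `i↑` and `s`. -/
theorem deriv_of_dual {r : Rule} {P Q : F} (h : RootStep r Q.negF P.negF) :
    Deriv (Step {r, .iDown, .iUp, .s}) P Q := by
  -- `P = (P,t) ⟶ (P,[Q,¬Q])`
  have h₁ : Step {r, .iDown, .iUp, .s} P (.con P (.dis Q Q.negF)) :=
    ((RootStep.iDown Q).step (by simp) (.conR P .hole)).congr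
      ((Equiv.ttCon P).symm.trans (.conComm _ _)) (.refl _)
  -- `(P,[Q,¬Q]) ⟶ (P,[Q,¬P]) = (P,[¬P,Q])`
  have h₂ : Step {r, .iDown, .iUp, .s} (.con P (.dis Q Q.negF)) (.con P (.dis P.negF Q)) :=
    (h.step (by simp) (.conR P (.disR Q .hole))).congr (.refl _)
      (.conCongr (.refl _) (.disComm _ _))
  have h₃ : Step {r, .iDown, .iUp, .s} (.con P (.dis P.negF Q)) (.dis (.con P P.negF) Q) :=
    (RootStep.s P P.negF Q).step (by simp) .hole
  have h₄ : Step {r, .iDown, .iUp, .s} (.dis (.con P P.negF) Q) Q :=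
    ((RootStep.iUp P).step (by simp) (.disL .hole Q)).congr (.refl _) (.ffDis Q)
  exact .step h₁ (.step h₂ (.step h₃ (.step h₄ (.eqv (.refl _)))))

/-- Switch is excluded because the dual of a switch instance is a switch instance only modulo
commutativity. -/
theorem RootStep.dual_of_ne_s {r : Rule} (hr : r ∈ SKS) (hs : r ≠ .s) {P Q : F}
    (h : RootStep r P Q) : RootStep r.dual Q.negF P.negF := by
  cases h with
  | s => exact absurd rfl hs
  | m P Q R S => exact .m P.negF R.negF Q.negF S.negF
  | aiDown A hA => exact .aiUp A.negF hA.negF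
  | aiUp A hA => exact .aiDown A.negF hA.negF
  | awDown _ hA => exact .awUp _ hA.negF
  | awUp _ hA => exact .awDown _ hA.negF
  | acDown _ hA => exact .acUp _ hA.negF
  | acUp _ hA => exact .acDown _ hA.negF
  | _ => simp [SKS] at hr

/-- Every rule of SKS is derivable using only its dual rule, the general identity
`i↓`, the general cut `i↑` and the switch `s`; in particular the self-dual
rules `s` and `m` are trivially derivable from themselves. -/
theorem sks_rule_from_dual :
    ∀ r ∈ SKS, RuleDerivable r {r.dual, .iDown, .iUp, .s} := by
  rintro r hr P Q ⟨r', hr', C, P', Q', hroot, hP, hQ⟩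
  obtain rfl : r' = r := hr'
  refine Deriv.congr hP (Deriv.fill C ?_) hQ
  by_cases hs : r' = .s
  · subst hs
    exact .step (hroot.step (by simp) .hole) (.eqv (.refl _))
  exact deriv_of_dual (hroot.dual_of_ne_s hr hs)

end DI
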